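/- The emptiness problem for register set automata with removal and register emptiness test is undecidable: there is no computable function that, given (an encoding of) an RsA with removal and register emptiness test A, decides whether L(A) = ∅. -/

import Mathlib

/-- A data word over the alphabet `Fin k`, with data domain `𝔻 = ℕ`. -/
abbrev DataWord (k : ℕ) : Type :=
  List (Fin k × ℕ)

/-- A transition of a (concretely encoded) register set automaton with removal and
register emptiness test: `(src, letter, gIn, gNin, gEmp, rem, upd, tgt)`.  Guards
`gIn`, `gNin`, `gEmp` and the removal set `rem` are lists of registers; the update
is a list indexed by register number, `none` standing for the current input `in` and
`some r` for register `r`. -/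
structure CRemTrans (k : ℕ) where
  src : ℕ
  letter : Fin k
  gIn : List ℕ
  gNin : List ℕ
  gEmp : List ℕ
  rem : List ℕ
  upd : List (List (Option ℕ))
  tgt : ℕ

instance (k : ℕ) : Primcodable (CRemTrans k) :=
  Primcodable.ofEquiv
    (ℕ × Fin k × List ℕ × List ℕ × List ℕ × List ℕ × List (List (Option ℕ)) × ℕ)
    { toFun := fun t => (t.src, t.letter, t.gIn, t.gNin, t.gEmp, t.rem, t.upd, t.tgt)
      invFun := fun p =>
        ⟨p.1, p.2.1, p.2.2.1, p.2.2.2.1, p.2.2.2.2.1, p.2.2.2.2.2.1,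
          p.2.2.2.2.2.2.1, p.2.2.2.2.2.2.2⟩
      left_inv := fun _ => rfl
      right_inv := fun _ => rfl }

/-- A (concretely encoded) register set automaton with removal and register emptiness
test, whose states are `0, …, nQ - 1` and registers are `0, …, nR - 1` (initial
segments of `ℕ`). -/
structure CRsARem (k : ℕ) where
  nQ : ℕ
  nR : ℕ
  trans : List (CRemTrans k)
  I : List ℕ
  F : List ℕ

instance (k : ℕ) : Primcodable (CRsARem k) :=
  Primcodable.ofEquiv (ℕ × ℕ × List (CRemTrans k) × List ℕ × List ℕ)
    { toFun := fun A => (A.nQ, A.nR, A.trans, A.I, A.F)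
      invFun := fun p => ⟨p.1, p.2.1, p.2.2.1, p.2.2.2.1, p.2.2.2.2⟩
      left_inv := fun _ => rfl
      right_inv := fun _ => rfl }

/-- The register assignment obtained by applying the update of `t` with current input
data value `d` to the assignment `f` (after the removal phase). -/
def CRemTrans.applyUpd {k : ℕ} (t : CRemTrans k) (f : ℕ → Finset ℕ) (d : ℕ) :
    ℕ → Finset ℕ := fun r =>
  ((t.upd.getD r []).map fun o =>
    match o with
    | none => ({d} : Finset ℕ)
    | some r' => f r').foldr (· ∪ ·) ∅

/-- The full effect of transition `t` on the assignment `f` with current input data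
value `d`: first remove `d` from every register in `rem`, then apply the update. -/
def CRemTrans.apply {k : ℕ} (t : CRemTrans k) (f : ℕ → Finset ℕ) (d : ℕ) :
    ℕ → Finset ℕ :=
  t.applyUpd (fun r => if r ∈ t.rem then (f r).erase d else f r) d

/-- One step of a `CRsARem` from configuration `c` to configuration `c'`, reading the
letter `x`: besides the membership guards, every register in `gEmp` must be empty. -/
def CRsARem.Step {k : ℕ} (A : CRsARem k) (c : ℕ × (ℕ → Finset ℕ)) (x : Fin k × ℕ)
    (c' : ℕ × (ℕ → Finset ℕ)) : Prop :=
  ∃ t ∈ A.trans, t.src = c.1 ∧ t.letter = x.1 ∧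
    (∀ r ∈ t.gIn, x.2 ∈ c.2 r) ∧ (∀ r ∈ t.gNin, x.2 ∉ c.2 r) ∧
    (∀ r ∈ t.gEmp, c.2 r = ∅) ∧
    c' = (t.tgt, t.apply c.2 x.2)

/-- Runs of a `CRsARem`. -/
inductive CRsARem.Run {k : ℕ} (A : CRsARem k) :
    (ℕ × (ℕ → Finset ℕ)) → DataWord k → (ℕ × (ℕ → Finset ℕ)) → Prop where
  | nil (c : ℕ × (ℕ → Finset ℕ)) : CRsARem.Run A c [] c
  | cons {c c' c'' : ℕ × (ℕ → Finset ℕ)} {x : Fin k × ℕ} {w : DataWord k} :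
      A.Step c x c' → CRsARem.Run A c' w c'' → CRsARem.Run A c (x :: w) c''

/-- The language of a `CRsARem`. -/
def CRsARem.Lang {k : ℕ} (A : CRsARem k) : Set (DataWord k) :=
  { w | ∃ q₀ ∈ A.I, ∃ c : ℕ × (ℕ → Finset ℕ),
      A.Run (q₀, fun _ => ∅) w c ∧ c.1 ∈ A.F }

/-- Well-formedness of a `CRsARem`: all states and registers mentioned lie in the
respective initial segments, the membership guards of each transition are disjoint,
and the update is a function on the registers. -/
def CRsARem.WellFormed {k : ℕ} (A : CRsARem k) : Prop :=
  (∀ q ∈ A.I, q < A.nQ) ∧ (∀ q ∈ A.F, q < A.nQ) ∧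
  ∀ t ∈ A.trans, t.src < A.nQ ∧ t.tgt < A.nQ ∧
    (∀ r ∈ t.gIn, r < A.nR) ∧ (∀ r ∈ t.gNin, r < A.nR) ∧
    (∀ r ∈ t.gEmp, r < A.nR) ∧ (∀ r ∈ t.rem, r < A.nR) ∧
    (∀ r ∈ t.gIn, r ∉ t.gNin) ∧
    t.upd.length = A.nR ∧
    ∀ l ∈ t.upd, ∀ r' : ℕ, some r' ∈ l → r' < A.nR


namespace RsaUndec

open Function

/-- Counter machine instructions. -/
inductive Instr where
  | inc (r : ℕ)
  | dec (r : ℕ)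
  | zero (r : ℕ)
  | nop
deriving DecidableEq, Encodable

/-- Regular programs over counter instructions. -/
inductive Prog where
  | atom (a : Instr)
  | seq (p q : Prog)
  | star (p : Prog)
deriving DecidableEq, Encodable

def Instr.rel : Instr → (ℕ → ℕ) → (ℕ → ℕ) → Prop
  | .inc r, s, s' => s' = update s r (s r + 1)
  | .dec r, s, s' => s r ≠ 0 ∧ s' = update s r (s r - 1)
  | .zero r, s, s' => s r = 0 ∧ s' = s
  | .nop, s, s' => s' = s

def Prog.rel : Prog → (ℕ → ℕ) → (ℕ → ℕ) → Prop
  | .atom a => a.rel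
  | .seq p q => fun s s' => ∃ t, p.rel s t ∧ q.rel t s'
  | .star p => Relation.ReflTransGen p.rel

@[simp] theorem rel_inc (r s s') :
    (Prog.atom (.inc r)).rel s s' ↔ s' = update s r (s r + 1) := Iff.rfl
@[simp] theorem rel_dec (r s s') :
    (Prog.atom (.dec r)).rel s s' ↔ s r ≠ 0 ∧ s' = update s r (s r - 1) := Iff.rfl
@[simp] theorem rel_zero (r s s') :
    (Prog.atom (.zero r)).rel s s' ↔ s r = 0 ∧ s' = s := Iff.rfl
@[simp] theorem rel_nop (s s') :
    (Prog.atom .nop).rel s s' ↔ s' = s := Iff.rfl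
@[simp] theorem rel_seq (p q s s') :
    (Prog.seq p q).rel s s' ↔ ∃ t, p.rel s t ∧ q.rel t s' := Iff.rfl

/-- Loop `p` until counter `c` is zero. -/
def W (p : Prog) (c : ℕ) : Prog := .seq (.star p) (.atom (.zero c))

theorem W_iff (p : Prog) (c : ℕ) (s s' : ℕ → ℕ) :
    (W p c).rel s s' ↔ (s c = 0 ∧ s' = s) ∨ ∃ t, p.rel s t ∧ (W p c).rel t s' := by
  constructor
  · rintro ⟨t, h1, h2⟩
    rcases Relation.ReflTransGen.cases_head h1 with rfl | ⟨u, hu, hut⟩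
    · left; exact h2
    · right; exact ⟨u, hu, t, hut, h2⟩
  · rintro (h | ⟨t, h1, u, h2, h3⟩)
    · exact ⟨s, Relation.ReflTransGen.refl, h⟩
    · exact ⟨u, Relation.ReflTransGen.head h1 h2, h3⟩

theorem W_zero {p : Prog} {c : ℕ} {s : ℕ → ℕ} (s' : ℕ → ℕ) (hp : ∀ t, p.rel s t → s c ≠ 0)
    (h : s c = 0) : (W p c).rel s s' ↔ s' = s := by
  rw [W_iff]
  constructor
  · rintro (h | ⟨t, ht, _⟩)
    · exact h.2
    · exact absurd h (hp t ht)
  · exact fun e => Or.inl ⟨h, e⟩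

theorem W_succ {p : Prog} {c : ℕ} {s : ℕ → ℕ} (s' : ℕ → ℕ)
    (h : s c ≠ 0) : (W p c).rel s s' ↔ ∃ t, p.rel s t ∧ (W p c).rel t s' := by
  rw [W_iff]; simp [h]

def clear (r : ℕ) : Prog := W (.atom (.dec r)) r

@[simp] theorem rel_clear (r : ℕ) (s s' : ℕ → ℕ) :
    (clear r).rel s s' ↔ s' = update s r 0 := by
  induction h : s r generalizing s with
  | zero =>
    rw [clear, W_zero _ (by simp_all) h, ← h, update_eq_self]
  | succ k ih =>
    rw [clear, W_succ _ (by omega)]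
    simp only [rel_dec]
    constructor
    · rintro ⟨t, ⟨_, rfl⟩, h3⟩
      have := (ih (update s r (s r - 1)) (by simp [h])).1 h3
      simpa using this
    · intro e
      refine ⟨_, ⟨by omega, rfl⟩, (ih _ (by simp [h])).2 (by simpa using e)⟩

def move (a b : ℕ) : Prog := W (.seq (.atom (.dec a)) (.atom (.inc b))) a

theorem rel_move {a b : ℕ} (hab : a ≠ b) (s s' : ℕ → ℕ) :
    (move a b).rel s s' ↔ s' = update (update s a 0) b (s b + s a) := by
  induction h : s a generalizing s with
  | zero =>
    rw [move, W_zero _ (by simp_all) h]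
    have : update (update s a 0) b (s b + 0) = s := by grind [update_apply]
    rw [this]
  | succ k ih =>
    rw [move, W_succ _ (by omega)]
    simp only [rel_seq, rel_dec, rel_inc]
    have key : update (update (update (update s a (s a - 1)) b (s b + 1)) a 0) b
        ((s b + 1) + k) = update (update s a 0) b (s b + (k+1)) := by
      grind [update_apply]
    have e1 : (update s a (s a - 1)) b = s b := by grind [update_apply]
    have ih' := ih (update (update s a (s a - 1)) b (s b + 1)) (by grind [update_apply])
    rw [update_self, key] at ih'
    rw [← ih']
    constructor
    · rintro ⟨t, ⟨u, ⟨_, rfl⟩, rfl⟩, h3⟩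
      rw [e1] at h3; exact h3
    · intro h3
      exact ⟨_, ⟨_, ⟨by omega, rfl⟩, rfl⟩, by rw [e1]; exact h3⟩

def move2 (a b c : ℕ) : Prog :=
  W (.seq (.atom (.dec a)) (.seq (.atom (.inc b)) (.atom (.inc c)))) a

theorem rel_move2 {a b c : ℕ} (hab : a ≠ b) (hac : a ≠ c) (hbc : b ≠ c) (s s' : ℕ → ℕ) :
    (move2 a b c).rel s s' ↔
      s' = update (update (update s a 0) b (s b + s a)) c (s c + s a) := by
  induction h : s a generalizing s with
  | zero =>
    rw [move2, W_zero _ (by simp_all) h]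
    have : update (update (update s a 0) b (s b + 0)) c (s c + 0) = s := by
      grind [update_apply]
    rw [this]
  | succ k ih =>
    rw [move2, W_succ _ (by omega)]
    simp only [rel_seq, rel_dec, rel_inc]
    have e1 : (update s a (s a - 1)) b = s b := by grind [update_apply]
    have e2 : (update (update s a (s a - 1)) b (s b + 1)) c = s c := by grind [update_apply]
    have ih' := ih (update (update (update s a (s a - 1)) b (s b + 1)) c (s c + 1))
      (by grind [update_apply])
    have key : update (update (update (update (update (update s a (s a - 1)) b (s b + 1)) c
        (s c + 1)) a 0) b ((update (update (update s a (s a - 1)) b (s b + 1)) c (s c + 1)) b + k))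
        c ((update (update (update s a (s a - 1)) b (s b + 1)) c (s c + 1)) c + k)
        = update (update (update s a 0) b (s b + (k+1))) c (s c + (k+1)) := by
      grind [update_apply]
    rw [key] at ih'
    rw [← ih']
    constructor
    · rintro ⟨t, ⟨u, ⟨_, rfl⟩, ⟨v, rfl, rfl⟩⟩, h3⟩
      rw [e1, e2] at h3; exact h3
    · intro h3
      exact ⟨_, ⟨_, ⟨by omega, rfl⟩, _, rfl, rfl⟩, by rw [e1, e2]; exact h3⟩

/-- Copy `a` to `b`, with scratch `t` (assumed zero). -/
def copy (a b t : ℕ) : Prog :=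
  if a = b then .atom .nop else .seq (clear b) (.seq (move2 a b t) (move t a))

theorem rel_copy {a b t : ℕ} (hat : a ≠ t) (hbt : b ≠ t) (s s' : ℕ → ℕ) (ht : s t = 0) :
    (copy a b t).rel s s' ↔ s' = update s b (s a) := by
  unfold copy
  split_ifs with hab
  · subst hab; simp
  · simp only [rel_seq, rel_clear, rel_move2 hab hat hbt, rel_move (Ne.symm hat),
      exists_eq_left]
    apply Eq.congr_right
    grind [update_apply]

/-- The relation `F` is computable by a program, for arbitrary placement of inputs and output,
using zeroed scratch counters `≥ b`. -/
def Par (n : ℕ) (F : (Fin n → ℕ) → ℕ → Prop) : Prop :=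
  ∀ (ins : Fin n → ℕ) (out b : ℕ), (∀ i, ins i < b) → out < b →
    ∃ P : Prog, ∀ s s', (∀ r, b ≤ r → s r = 0) →
      (P.rel s s' ↔ ∃ y, F (fun i => s (ins i)) y ∧ s' = update s out y)

def Tot (n : ℕ) (f : (Fin n → ℕ) → ℕ) : Prop :=
  ∀ (ins : Fin n → ℕ) (out b : ℕ), (∀ i, ins i < b) → out < b →
    ∃ P : Prog, ∀ s s', (∀ r, b ≤ r → s r = 0) →
      (P.rel s s' ↔ s' = update s out (f (fun i => s (ins i))))

theorem tot_iff (n f) : Tot n f ↔ Par n (fun x y => y = f x) := by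
  simp [Tot, Par]

theorem Par.congr {n : ℕ} {F G : (Fin n → ℕ) → ℕ → Prop} (hF : Par n F)
    (h : ∀ x y, G x y ↔ F x y) : Par n G := by
  have : G = F := by funext x y; exact propext (h x y)
  rwa [this]

theorem tot_zero (n) : Tot n (fun _ => 0) := by
  intro ins out b _ _
  exact ⟨clear out, fun s s' _ => by simp⟩

theorem tot_get {n} (i : Fin n) : Tot n (fun x => x i) := by
  intro ins out b h1 h2
  refine ⟨copy (ins i) out b, fun s s' h => ?_⟩
  rw [rel_copy (h1 i).ne h2.ne _ _ (h b le_rfl)]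

theorem tot_succ : Tot 1 (fun x => x 0 + 1) := by
  intro ins out b h1 h2
  refine ⟨.seq (copy (ins 0) out b) (.atom (.inc out)), fun s s' h => ?_⟩
  simp [rel_copy (h1 0).ne h2.ne _ _ (h b le_rfl)]

theorem clears (b n : ℕ) : ∃ P : Prog, ∀ s s',
    P.rel s s' ↔ s' = fun r => if b ≤ r ∧ r < b + n then 0 else s r := by
  induction n with
  | zero => exact ⟨.atom .nop, fun s s' => by
      simp only [rel_nop]; apply Eq.congr_right; grind⟩
  | succ n ih =>
    obtain ⟨P, hP⟩ := ih
    refine ⟨.seq P (clear (b + n)), fun s s' => ?_⟩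
    simp only [rel_seq, hP, rel_clear, exists_eq_left]
    apply Eq.congr_right
    grind [update_apply]

theorem par_comp {m n : ℕ} {F : (Fin n → ℕ) → ℕ → Prop} {G : Fin n → (Fin m → ℕ) → ℕ → Prop}
    (hF : Par n F) (hG : ∀ i, Par m (G i)) :
    Par m (fun x y => ∃ ys : Fin n → ℕ, (∀ i, G i x (ys i)) ∧ F ys y) := by
  intro ins out b h1 h2
  have hQ : ∀ j, j ≤ n → ∃ P : Prog, ∀ s s', (∀ r, b ≤ r → s r = 0) →
      (P.rel s s' ↔ ∃ ys : ℕ → ℕ, (∀ i : Fin n, i.1 < j → G i (fun i => s (ins i)) (ys i)) ∧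
        s' = fun r => if b ≤ r ∧ r < b + j then ys (r - b) else s r) := by
    intro j
    induction j with
    | zero => intro _; exact ⟨.atom .nop, fun s s' _ => by
        simp only [rel_nop]
        constructor
        · rintro rfl; exact ⟨s', by simp, by grind⟩
        · rintro ⟨ys, _, h⟩; rw [h]; grind⟩
    | succ j ih =>
      intro hj
      obtain ⟨P, hP⟩ := ih (by omega)
      obtain ⟨Q, hQ⟩ := hG ⟨j, hj⟩ ins (b + j) (b + n) (fun i => by have := h1 i; omega) (by omega)
      refine ⟨.seq P Q, fun s s' hs => ?_⟩
      have e : ∀ ys : ℕ → ℕ, (fun i => (fun r => if b ≤ r ∧ r < b + j then ys (r - b) else s r)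
          (ins i)) = fun i => s (ins i) := by
        intro ys; funext i; have := h1 i; grind
      simp only [rel_seq]
      constructor
      · rintro ⟨t, ht, ht2⟩
        obtain ⟨ys, hys, rfl⟩ := (hP _ _ hs).1 ht
        obtain ⟨y, hy, rfl⟩ := (hQ _ _ (by grind)).1 ht2
        rw [e] at hy
        refine ⟨update ys j y, ?_, ?_⟩
        · intro i hi
          by_cases hij : i.1 = j
          · subst hij; simpa using hy
          · rw [update_of_ne hij]; exact hys i (by omega)
        · grind [update_apply]
      · rintro ⟨ys, hys, rfl⟩
        refine ⟨_, (hP _ _ hs).2 ⟨ys, fun i hi => hys i (by omega), rfl⟩, ?_⟩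
        refine (hQ _ _ (by grind)).2 ⟨ys j, ?_, ?_⟩
        · rw [e]; exact hys ⟨j, hj⟩ (by simp)
        · grind [update_apply]
  obtain ⟨P, hP⟩ := hQ n le_rfl
  obtain ⟨Q, hQ⟩ := hF (fun i => b + i) out (b + n) (fun i => by simp) (by omega)
  obtain ⟨C, hC⟩ := clears b n
  refine ⟨.seq P (.seq Q C), fun s s' hs => ?_⟩
  have e : ∀ ys : ℕ → ℕ, (fun i : Fin n =>
      (fun r => if b ≤ r ∧ r < b + n then ys (r - b) else s r) (b + i.1)) = fun i : Fin n => ys i.1 := by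
    intro ys; funext i; have := i.2; simp
  simp only [rel_seq, hC]
  constructor
  · rintro ⟨t, ht, u, hu, rfl⟩
    obtain ⟨ys, hys, rfl⟩ := (hP _ _ hs).1 ht
    obtain ⟨y, hy, rfl⟩ := (hQ _ _ (by grind)).1 hu
    rw [e] at hy
    refine ⟨y, ⟨fun i => ys i, fun i => hys i i.2, hy⟩, ?_⟩
    grind [update_apply]
  · rintro ⟨y, ⟨ys, hys, hy⟩, rfl⟩
    refine ⟨_, (hP _ _ hs).2 ⟨fun j => if h : j < n then ys ⟨j, h⟩ else 0, ?_, rfl⟩, _,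
      (hQ _ _ (by grind)).2 ⟨y, ?_, rfl⟩, ?_⟩
    · intro i _; simpa using hys i
    · simpa using hy
    · grind [update_apply]

theorem tot_comp {m n : ℕ} {f : (Fin n → ℕ) → ℕ} {g : Fin n → (Fin m → ℕ) → ℕ}
    (hf : Tot n f) (hg : ∀ i, Tot m (g i)) : Tot m (fun x => f (fun i => g i x)) := by
  simp only [tot_iff] at *
  have := par_comp hf hg
  convert this using 3 with x y
  constructor
  · intro h; exact ⟨fun i => g i x, by simp, h⟩
  · rintro ⟨ys, h1, h2⟩
    rw [h2]; congr; funext i; rw [h1]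

def precF {n : ℕ} (f : (Fin n → ℕ) → ℕ) (g : (Fin (n+2) → ℕ) → ℕ) (x : Fin n → ℕ) (k : ℕ) : ℕ :=
  Nat.rec (f x) (fun y IH => g (Fin.cons y (Fin.cons IH x))) k

theorem cons_ins {n : ℕ} (s : ℕ → ℕ) (a : ℕ) (ins : Fin n → ℕ) :
    (fun i : Fin (n+1) => s ((Fin.cons a ins : Fin (n+1) → ℕ) i)) =
      Fin.cons (s a) (fun i => s (ins i)) := by
  funext i; refine Fin.cases ?_ (fun i => ?_) i <;> simp

theorem cons_lt {n : ℕ} {b a : ℕ} {ins : Fin n → ℕ} (ha : a < b) (h : ∀ i, ins i < b) :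
    ∀ i, (Fin.cons a ins : Fin (n+1) → ℕ) i < b := by
  intro i; refine Fin.cases ?_ (fun i => ?_) i <;> simp [*]

theorem tot_prec {n : ℕ} {f : (Fin n → ℕ) → ℕ} {g : (Fin (n+2) → ℕ) → ℕ}
    (hf : Tot n f) (hg : Tot (n+2) g) :
    Tot (n+1) (fun x => precF f g (fun i => x i.succ) (x 0)) := by
  intro ins out b h1 h2
  obtain ⟨P, hP⟩ := hf (fun i => ins i.succ) (b+1) (b+3) (fun i => by have := h1 i.succ; omega)
    (by omega)
  obtain ⟨Q, hQ⟩ := hg (Fin.cons (b+2) (Fin.cons (b+1) (fun i => ins i.succ))) (b+1) (b+3)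
    (cons_lt (by omega) (cons_lt (by omega) (fun i => by have := h1 i.succ; omega))) (by omega)
  simp only [cons_ins] at hQ
  set B : Prog := .seq (.atom (.dec b)) (.seq Q (.atom (.inc (b+2)))) with hB
  have loop : ∀ k s s', (∀ r, b + 3 ≤ r → s r = 0) → s b = k →
      s (b+1) = precF f g (fun i => s (ins i.succ)) (s (b+2)) →
      ((W B b).rel s s' ↔ s' = update (update (update s b 0) (b+1)
        (precF f g (fun i => s (ins i.succ)) (s (b+2) + k))) (b+2) (s (b+2) + k)) := by
    intro k
    induction k with
    | zero =>
      intro s s' hs hk ha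
      rw [W_zero _ (by simp +contextual [hB]) hk]
      apply Eq.congr_right
      grind [update_apply]
    | succ k ih =>
      intro s s' hs hk ha
      rw [W_succ _ (by omega)]
      set x := fun i : Fin n => s (ins i.succ) with hx
      have h1' : ∀ i : Fin n, ins i.succ < b := fun i => h1 _
      set u := update (update (update s b k) (b+1) (precF f g x (s (b+2) + 1)))
        (b+2) (s (b+2) + 1) with hu
      have hux : (fun i : Fin n => u (ins i.succ)) = x := by
        funext i; have := h1' i; grind [update_apply]
      have hbody : ∀ t, B.rel s t ↔ t = u := by
        intro t
        simp only [hB, rel_seq, rel_dec, rel_inc]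
        have e : g (Fin.cons ((update s b (s b - 1)) (b+2)) (Fin.cons
            ((update s b (s b - 1)) (b+1))
            (fun i : Fin n => (update s b (s b - 1)) (ins i.succ)))) =
            precF f g x (s (b+2) + 1) := by
          have : (fun i : Fin n => (update s b (s b - 1)) (ins i.succ)) = x := by
            funext i; have := h1' i; grind [update_apply]
          rw [this, update_of_ne (by omega), update_of_ne (by omega), ha]
          rfl
        constructor
        · rintro ⟨v, ⟨_, rfl⟩, w, hw, rfl⟩
          rw [hQ _ _ (by grind [update_apply]), e] at hw
          subst hw
          grind [update_apply]
        · intro ht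
          refine ⟨_, ⟨by omega, rfl⟩, _, (hQ _ _ (by grind [update_apply])).2 rfl, ?_⟩
          rw [e, ht]
          grind [update_apply]
      simp only [hbody, exists_eq_left]
      rw [ih u s' (by grind [update_apply]) (by grind [update_apply])
        (by rw [hux]; grind [update_apply]), hux]
      apply Eq.congr_right
      have : u (b+2) = s (b+2) + 1 := by grind [update_apply]
      rw [this, show s (b+2) + 1 + k = s (b+2) + (k+1) by omega]
      grind [update_apply]
  refine ⟨.seq (copy (ins 0) b (b+3)) (.seq P (.seq (W B b) (.seq (clear out)
    (.seq (move (b+1) out) (clear (b+2)))))), fun s s' hs => ?_⟩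
  have h10 := h1 0
  have h1' : ∀ i : Fin n, ins i.succ < b := fun i => h1 _
  simp only [rel_seq, rel_clear, rel_move (show b + 1 ≠ out by omega),
    rel_copy (show ins 0 ≠ b + 3 by omega) (show b ≠ b + 3 by omega) s _ (hs _ (by omega)),
    exists_eq_left]
  set s1 := update s b (s (ins 0)) with hs1
  have e1 : (fun i : Fin n => s1 (ins i.succ)) = fun i => s (ins i.succ) := by
    funext i; have := h1' i; grind [update_apply]
  simp only [hP s1 _ (by grind [update_apply]), exists_eq_left, e1]
  set s2 := update s1 (b+1) (f fun i => s (ins i.succ)) with hs2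
  have e2 : (fun i : Fin n => s2 (ins i.succ)) = fun i => s (ins i.succ) := by
    funext i; have := h1' i; grind [update_apply]
  have e3 : s2 (b+2) = 0 := by grind [update_apply]
  have hl := fun s' => loop (s (ins 0)) s2 s' (by grind [update_apply]) (by grind [update_apply])
    (by rw [e2, e3, hs2, update_self]; rfl)
  rw [e2, e3] at hl
  simp only [hl, exists_eq_left]
  apply Eq.congr_right
  clear hl loop hP hQ hB e1 e2 e3
  funext r
  simp only [hs2, hs1, update_apply]
  grind

theorem par_rfind {n : ℕ} {f : (Fin (n+1) → ℕ) → ℕ} (hf : Tot (n+1) f) :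
    Par n (fun x y => f (Fin.cons y x) = 0 ∧ ∀ m < y, f (Fin.cons m x) ≠ 0) := by
  intro ins out b h1 h2
  obtain ⟨Q, hQ⟩ := hf (Fin.cons b ins) (b+1) (b+2)
    (cons_lt (by omega) (fun i => by have := h1 i; omega)) (by omega)
  simp only [cons_ins] at hQ
  set B : Prog := .seq (.atom (.dec (b+1))) (.seq (.atom (.inc b)) Q) with hB
  -- states in the loop
  have main : ∀ s, (∀ r, b ≤ r → s r = 0) → ∀ s',
      (Prog.seq Q (W B (b+1))).rel s s' ↔ ∃ y,
        (f (Fin.cons y (fun i => s (ins i))) = 0 ∧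
          ∀ m < y, f (Fin.cons m (fun i => s (ins i))) ≠ 0) ∧ s' = update s b y := by
    intro s hs s'
    set x := fun i => s (ins i) with hx
    set u : ℕ → ℕ → ℕ := fun i => update (update s b i) (b+1) (f (Fin.cons i x)) with hu
    have hbody : ∀ i t, B.rel (u i) t ↔ f (Fin.cons i x) ≠ 0 ∧ t = u (i+1) := by
      intro i t
      simp only [hB, rel_seq, rel_dec, rel_inc]
      set v := update (update s b (i+1)) (b+1) (f (Fin.cons i x) - 1) with hv
      have hvx : (fun i => v (ins i)) = x := by
        funext i; have := h1 i; grind [update_apply]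
      have hvb : v b = i + 1 := by grind [update_apply]
      have e0 : u i (b+1) = f (Fin.cons i x) := by grind [update_apply]
      have e : update (update (u i) (b+1) (u i (b+1) - 1)) b
          ((update (u i) (b+1) (u i (b+1) - 1)) b + 1) = v := by
        grind [update_apply]
      have hq := hQ v t (by grind [update_apply])
      rw [hvx, hvb] at hq
      have e5 : update v (b+1) (f (Fin.cons (i+1) x)) = u (i+1) := by
        grind [update_apply]
      rw [e5] at hq
      rw [← hq]
      constructor
      · rintro ⟨t1, ⟨h, rfl⟩, t2, rfl, ht⟩
        rw [e] at ht
        exact ⟨by rwa [e0] at h, ht⟩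
      · rintro ⟨h, ht⟩
        exact ⟨_, ⟨by rwa [e0], rfl⟩, _, rfl, by rw [e]; exact ht⟩
    have hstart : ∀ t, Q.rel s t ↔ t = u 0 := by
      intro t
      rw [hQ s t (by grind), hs b le_rfl]
      apply Eq.congr_right
      grind [update_apply]
    have hstar : ∀ t, Relation.ReflTransGen B.rel (u 0) t ↔
        ∃ y, (∀ m < y, f (Fin.cons m x) ≠ 0) ∧ t = u y := by
      intro t
      constructor
      · intro h
        induction h with
        | refl => exact ⟨0, by simp, rfl⟩
        | tail _ h2 ih =>
          obtain ⟨y, hy, rfl⟩ := ih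
          obtain ⟨h3, rfl⟩ := (hbody _ _).1 h2
          exact ⟨y+1, fun m hm => by
            rcases Nat.lt_succ_iff_lt_or_eq.1 hm with h | rfl
            · exact hy m h
            · exact h3, rfl⟩
      · rintro ⟨y, hy, rfl⟩
        induction y with
        | zero => exact .refl
        | succ y ih =>
          exact (ih fun m hm => hy m (by omega)).tail ((hbody _ _).2 ⟨hy y (by omega), rfl⟩)
    have huz : ∀ y, u y (b+1) = f (Fin.cons y x) := by intro y; grind [update_apply]
    have hub : ∀ y, f (Fin.cons y x) = 0 → u y = update s b y := by
      intro y h; grind [update_apply]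
    simp only [rel_seq, hstart, exists_eq_left]
    constructor
    · rintro ⟨t, h1, h2, rfl⟩
      obtain ⟨y, hy, rfl⟩ := (hstar _).1 h1
      rw [huz] at h2
      exact ⟨y, ⟨h2, hy⟩, hub y h2⟩
    · rintro ⟨y, ⟨h, hy⟩, rfl⟩
      refine ⟨u y, (hstar _).2 ⟨y, hy, rfl⟩, by rw [huz]; exact h, (hub y h).symm⟩
  refine ⟨.seq (.seq Q (W B (b+1))) (.seq (clear out) (move b out)), fun s s' hs => ?_⟩
  rw [rel_seq]
  simp only [main s hs]
  simp only [rel_seq, rel_clear, rel_move (show b ≠ out by omega), exists_eq_left]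
  constructor
  · rintro ⟨t, ⟨y, hy, rfl⟩, rfl⟩
    exact ⟨y, hy, by grind [update_apply]⟩
  · rintro ⟨y, hy, rfl⟩
    exact ⟨_, ⟨y, hy, rfl⟩, by grind [update_apply]⟩

theorem mem_mOfFn {n : ℕ} (g : Fin n → Part ℕ) (v : List.Vector ℕ n) :
    v ∈ (List.Vector.mOfFn g : Part (List.Vector ℕ n)) ↔ ∀ i, v.get i ∈ g i := by
  induction n with
  | zero =>
    have : v = List.Vector.nil := Subsingleton.elim _ _
    simp [List.Vector.mOfFn, this, pure]
  | succ n ih =>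
    simp only [List.Vector.mOfFn, Part.bind_eq_bind, Part.mem_bind_iff, Part.pure_eq_some,
      Part.mem_some_iff, ih, Fin.forall_fin_succ]
    constructor
    · rintro ⟨a, ha, w, hw, rfl⟩
      exact ⟨by simpa using ha, by simpa using hw⟩
    · rintro ⟨h0, hs⟩
      refine ⟨v.head, by simpa using h0, v.tail, fun i => ?_, by simp⟩
      have := hs i
      rwa [List.Vector.get_tail_succ]

theorem ofFn_cons {n : ℕ} (a : ℕ) (x : Fin n → ℕ) :
    List.Vector.ofFn (Fin.cons a x : Fin (n+1) → ℕ) = a ::ᵥ List.Vector.ofFn x := by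
  simp [List.Vector.ofFn]

theorem tot_of_primrec {n : ℕ} {f : List.Vector ℕ n → ℕ} (hf : Nat.Primrec' f) :
    Tot n (fun x => f (List.Vector.ofFn x)) := by
  induction hf with
  | zero => exact tot_zero 0
  | succ => exact tot_succ
  | get i => simpa using tot_get i
  | comp g _ _ ihf ihg => exact tot_comp ihf ihg
  | prec _ _ ihf ihg =>
    have := tot_prec ihf ihg
    convert this using 2 with x
    simp only [precF, ofFn_cons]
    simp [List.Vector.ofFn]

theorem par_of_partrec {n : ℕ} {f : List.Vector ℕ n →. ℕ} (hf : Nat.Partrec' f) :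
    Par n (fun x y => y ∈ f (List.Vector.ofFn x)) := by
  have aux : ∀ {n : ℕ} {f : List.Vector ℕ n → ℕ}, Nat.Partrec' (f : List.Vector ℕ n →. ℕ) →
      Par n (fun x y => y ∈ (f : List.Vector ℕ n →. ℕ) (List.Vector.ofFn x)) →
      Tot n (fun x => f (List.Vector.ofFn x)) := by
    intro n f _ h
    rw [tot_iff]
    simpa using h
  induction hf with
  | prim h =>
    have := (tot_iff _ _).1 (tot_of_primrec h)
    simpa using this
  | comp g _ _ ihf ihg =>
    refine (par_comp ihf ihg).congr fun x y => ?_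
    refine Part.mem_bind_iff.trans ?_
    simp only [mem_mOfFn]
    constructor
    · rintro ⟨v, h1, h2⟩
      exact ⟨v.get, h1, by simpa using h2⟩
    · rintro ⟨ys, h1, h2⟩
      exact ⟨List.Vector.ofFn ys, by simpa using h1, h2⟩
  | rfind h ih =>
    refine (par_rfind (aux h ih)).congr fun x y => ?_
    refine Nat.mem_rfind.trans ?_
    simp [ofFn_cons]

theorem exists_prog {f : ℕ →. ℕ} (hf : Partrec f) : ∃ P : Prog, ∀ n,
    (∃ s', P.rel (update (fun _ => 0) 0 n) s') ↔ (f n).Dom := by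
  have := par_of_partrec (Nat.Partrec'.part_iff₁.2 hf)
  obtain ⟨P, hP⟩ := this (fun _ => 0) 1 2 (by simp) (by simp)
  refine ⟨P, fun n => ?_⟩
  simp only [hP (update (fun _ => 0) 0 n) _ (by grind [update_apply])]
  simp [List.Vector.ofFn, Part.dom_iff_mem]

/-- Control flow edges of a program with continuation stacks as states. -/
def edges : Prog → List Prog → List (List Prog × Instr × List Prog)
  | .atom a, K => [(.atom a :: K, a, K)]
  | .seq p q, K => (.seq p q :: K, .nop, p :: q :: K) :: (edges p (q :: K) ++ edges q K)
  | .star p, K => (.star p :: K, .nop, K) :: (.star p :: K, .nop, p :: .star p :: K) ::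
      edges p (.star p :: K)

def krel : List Prog → (ℕ → ℕ) → (ℕ → ℕ) → Prop
  | [], s, s' => s' = s
  | p :: K, s, s' => ∃ t, p.rel s t ∧ krel K t s'

theorem edges_sound (p : Prog) (K A B : List Prog) (a : Instr) (s t s' : ℕ → ℕ)
    (h : (A, a, B) ∈ edges p K) (ha : a.rel s t) (hB : krel B t s') : krel A s s' := by
  induction p generalizing K with
  | atom b =>
    simp only [edges, List.mem_singleton, Prod.mk.injEq] at h
    obtain ⟨rfl, rfl, rfl⟩ := h
    exact ⟨t, ha, hB⟩
  | seq p q ihp ihq =>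
    simp only [edges, List.mem_cons, List.mem_append, Prod.mk.injEq] at h
    rcases h with ⟨rfl, rfl, rfl⟩ | h | h
    · cases ha
      obtain ⟨u, hu, v, hv, h⟩ := hB
      exact ⟨v, ⟨u, hu, hv⟩, h⟩
    · exact ihp _ h
    · exact ihq _ h
  | star p ih =>
    simp only [edges, List.mem_cons, Prod.mk.injEq] at h
    rcases h with ⟨rfl, rfl, rfl⟩ | ⟨rfl, rfl, rfl⟩ | h
    · cases ha
      exact ⟨s, Relation.ReflTransGen.refl, hB⟩
    · cases ha
      obtain ⟨u, hu, v, hv, h⟩ := hB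
      exact ⟨v, Relation.ReflTransGen.head hu hv, h⟩
    · exact ih _ h

/-- Steps of a counter machine given by a list of edges. -/
def EStep (E : List (ℕ × Instr × ℕ)) (c c' : ℕ × (ℕ → ℕ)) : Prop :=
  ∃ a, (c.1, a, c'.1) ∈ E ∧ a.rel c.2 c'.2

def encE (e : List Prog × Instr × List Prog) : ℕ × Instr × ℕ :=
  (Encodable.encode e.1, e.2.1, Encodable.encode e.2.2)

theorem edges_complete (E : List (ℕ × Instr × ℕ)) (p : Prog) (K : List Prog) (s s' : ℕ → ℕ)
    (hE : ∀ e ∈ edges p K, encE e ∈ E) (h : p.rel s s') :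
    Relation.ReflTransGen (EStep E) (Encodable.encode (p :: K), s) (Encodable.encode K, s') := by
  induction p generalizing K s s' with
  | atom b =>
    exact .single ⟨b, hE (.atom b :: K, b, K) (by simp [edges]), h⟩
  | seq p q ihp ihq =>
    obtain ⟨t, h1, h2⟩ := h
    refine .head (b := (Encodable.encode (p :: q :: K), s))
      ⟨.nop, hE (.seq p q :: K, .nop, p :: q :: K) (by simp [edges]), rfl⟩ ?_
    exact (ihp (q :: K) s t (fun e he => hE e (by simp [edges, he])) h1).trans
      (ihq K t s' (fun e he => hE e (by simp [edges, he])) h2)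
  | star p ih =>
    have h' : Relation.ReflTransGen p.rel s s' := h
    induction h' using Relation.ReflTransGen.head_induction_on with
    | refl => exact .single ⟨.nop, hE (.star p :: K, .nop, K) (by simp [edges]), rfl⟩
    | @head s t h1 h2 ih2 =>
      refine .head (b := (Encodable.encode (p :: .star p :: K), s))
        ⟨.nop, hE (.star p :: K, .nop, p :: .star p :: K) (by simp [edges]), rfl⟩ ?_
      exact (ih (.star p :: K) s t (fun e he => hE e (by simp [edges, he])) h1).trans
        (ih2 h2)

/-- The edge list which first loads `n` into counter `0`, then runs `p`. -/
def allE (p : Prog) (N n : ℕ) : List (ℕ × Instr × ℕ) :=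
  ((N, .nop, Encodable.encode [p]) :: (edges p []).map encE) ++
    (List.range n).map fun j => (N + j + 1, Instr.inc 0, N + j)

theorem allE_iff (p : Prog) (N n : ℕ) (hN : ∀ e ∈ edges p [], Encodable.encode e.1 < N ∧ Encodable.encode e.2.2 < N)
    (hpN : Encodable.encode [p] < N)
    (hfin : Encodable.encode ([] : List Prog) < N) (s' : ℕ → ℕ) :
    Relation.ReflTransGen (EStep (allE p N n)) (N + n, fun _ => 0)
      (Encodable.encode ([] : List Prog), s') ↔ p.rel (update (fun _ => 0) 0 n) s' := by
  constructor
  · intro h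
    have key : ∀ c : ℕ × (ℕ → ℕ), Relation.ReflTransGen (EStep (allE p N n)) c
        (Encodable.encode ([] : List Prog), s') →
        (∀ K : List Prog, c.1 = Encodable.encode K → c.1 < N → krel K c.2 s') ∧
        (∀ j, c.1 = N + j → p.rel (update c.2 0 (c.2 0 + j)) s') := by
      intro c hc
      induction hc using Relation.ReflTransGen.head_induction_on with
      | refl =>
        constructor
        · intro K hK _
          have : K = [] := (Encodable.encode_injective hK).symm
          subst this
          rfl
        · intro j hj
          simp only at hj
          omega
      | @head c d h1 h2 ih =>
        obtain ⟨q, s⟩ := c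
        obtain ⟨q', t⟩ := d
        obtain ⟨a, ha, har⟩ := h1
        simp only at *
        simp only [allE, List.mem_append, List.mem_cons, List.mem_map, Prod.mk.injEq,
          List.mem_range] at ha
        constructor
        · rintro K rfl hlt
          rcases ha with (⟨h, _, _⟩ | ⟨e, he, hee⟩) | ⟨j, hj, h, _, _⟩
          · omega
          · obtain ⟨A, a', B⟩ := e
            simp only [encE, Prod.mk.injEq] at hee
            obtain ⟨h1, rfl, rfl⟩ := hee
            have := Encodable.encode_injective h1
            subst this
            exact edges_sound p [] A B a' s t s' he har (ih.1 B rfl (hN _ he).2)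
          · omega
        · rintro i rfl
          rcases ha with (⟨h, rfl, rfl⟩ | ⟨e, he, hee⟩) | ⟨j, hj, h, rfl, rfl⟩
          · have : i = 0 := by omega
            subst this
            cases har
            obtain ⟨u, hu, rfl⟩ := ih.1 [p] rfl hpN
            simpa using hu
          · have := (hN e he).1
            simp only [encE, Prod.mk.injEq] at hee
            omega
          · have : i = j + 1 := by omega
            subst this
            have har' : t = update s 0 (s 0 + 1) := har
            have := ih.2 j rfl
            rw [har'] at this
            simp only [update_self, update_idem] at this
            rwa [show s 0 + (j + 1) = s 0 + 1 + j by omega]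
    have := (key _ h).2 n rfl
    simpa using this
  · intro h
    have h1 : ∀ j, j ≤ n → Relation.ReflTransGen (EStep (allE p N n)) (N + n, fun _ => 0)
        (N + (n - j), update (fun _ => 0) 0 j) := by
      intro j
      induction j with
      | zero => intro _; simp; exact .refl
      | succ j ih =>
        intro hj
        refine (ih (by omega)).tail ⟨.inc 0, ?_, ?_⟩
        · simp only [allE, List.mem_append, List.mem_map, List.mem_range]
          right
          exact ⟨n - (j+1), by omega, by simp; omega⟩
        · simp [Instr.rel]
    refine (h1 n le_rfl).trans (.head (b := (Encodable.encode [p], (update (fun _ => 0) 0 n : ℕ → ℕ)))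
      ⟨.nop, by simp [allE], (rfl : (update (fun _ => 0) 0 n : ℕ → ℕ) = _)⟩ ?_)
    exact edges_complete _ p [] _ _ (fun e he => by
      simp only [allE, List.mem_append, List.mem_cons, List.mem_map]
      exact Or.inl (Or.inr ⟨e, he, rfl⟩)) h

/-- The transition implementing an edge. -/
def tr (k nR : ℕ) (e : ℕ × Instr × ℕ) : CRemTrans (k + 1) where
  src := e.1
  letter := 0
  gIn := match e.2.1 with | .dec r => [r] | _ => []
  gNin := match e.2.1 with | .inc r => [r] | _ => []
  gEmp := match e.2.1 with | .zero r => [r] | _ => []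
  rem := match e.2.1 with | .dec r => [r] | _ => []
  upd := (List.range nR).map fun x => if e.2.1 = .inc x then [some x, none] else [some x]
  tgt := e.2.2

def Instr.reg : Instr → ℕ
  | .inc r => r
  | .dec r => r
  | .zero r => r
  | .nop => 0

theorem tr_apply (k nR : ℕ) (q q' : ℕ) (a : Instr) (f : ℕ → Finset ℕ) (d : ℕ)
    (hf : ∀ r, nR ≤ r → f r = ∅) (ha : a.reg < nR) :
    (tr k nR (q, a, q')).apply f d = match a with
      | .inc r => update f r (insert d (f r))
      | .dec r => update f r ((f r).erase d)
      | _ => f := by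
  funext x
  by_cases hx : x < nR
  · cases a with
    | inc r =>
      by_cases hxr : r = x
      · subst hxr
        simp [CRemTrans.apply, CRemTrans.applyUpd, tr, hx]
      · simp [CRemTrans.apply, CRemTrans.applyUpd, tr, hx, hxr, update_of_ne (Ne.symm hxr)]
    | dec r =>
      by_cases hxr : x = r
      · subst hxr
        simp [CRemTrans.apply, CRemTrans.applyUpd, tr, hx]
      · simp [CRemTrans.apply, CRemTrans.applyUpd, tr, hx, hxr]
    | zero r => simp [CRemTrans.apply, CRemTrans.applyUpd, tr, hx]
    | nop => simp [CRemTrans.apply, CRemTrans.applyUpd, tr, hx]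
  · have h0 : (tr k nR (q, a, q')).apply f d x = ∅ := by
      simp [CRemTrans.apply, CRemTrans.applyUpd, tr, hx]
    rw [h0]
    have hfx := hf x (by omega)
    cases a with
    | inc r =>
      have : x ≠ r := by simp only [Instr.reg] at ha; omega
      simp [this, hfx]
    | dec r =>
      have : x ≠ r := by simp only [Instr.reg] at ha; omega
      simp [this, hfx]
    | zero r => simp [hfx]
    | nop => simp [hfx]

/-- The automaton for a list of edges. -/
def mkA (k nQ nR : ℕ) (E : List (ℕ × Instr × ℕ)) (i f : ℕ) : CRsARem (k + 1) where
  nQ := nQ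
  nR := nR
  trans := E.map (tr k nR)
  I := [i]
  F := [f]

theorem step_sound {k nQ nR : ℕ} {E : List (ℕ × Instr × ℕ)} {i fin : ℕ}
    (hE : ∀ e ∈ E, e.2.1.reg < nR) {q q' : ℕ} {f f' : ℕ → Finset ℕ} {x : Fin (k+1) × ℕ}
    (hf : ∀ r, nR ≤ r → f r = ∅)
    (h : (mkA k nQ nR E i fin).Step (q, f) x (q', f')) :
    EStep E (q, fun r => (f r).card) (q', fun r => (f' r).card) ∧ ∀ r, nR ≤ r → f' r = ∅ := by
  obtain ⟨t, ht, h1, h2, h3, h4, h5, h6⟩ := h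
  simp only [mkA, List.mem_map] at ht
  obtain ⟨⟨p, a, p'⟩, he, rfl⟩ := ht
  have hr := hE _ he
  simp only at hr
  simp only [Prod.mk.injEq] at h6
  obtain ⟨rfl, rfl⟩ := h6
  have hpq : p = q := h1
  subst hpq
  rw [tr_apply k nR p q' a f x.2 hf hr]
  refine ⟨⟨a, he, ?_⟩, ?_⟩
  · cases a with
    | inc r =>
      have : x.2 ∉ f r := h4 r (by simp [tr])
      funext y
      by_cases hy : y = r
      · subst hy; simp [this]
      · simp [hy]
    | dec r =>
      have : x.2 ∈ f r := h3 r (by simp [tr])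
      refine ⟨(Finset.card_pos.2 ⟨_, this⟩).ne', ?_⟩
      funext y
      by_cases hy : y = r
      · subst hy; simp [this]
      · simp [hy]
    | zero r =>
      have : f r = ∅ := h5 r (by simp [tr])
      exact ⟨by simp [this], rfl⟩
    | nop => rfl
  · intro y hy
    have := hf y hy
    cases a with
    | inc r =>
      have : y ≠ r := by simp only [Instr.reg] at hr; omega
      simp [*]
    | dec r =>
      have : y ≠ r := by simp only [Instr.reg] at hr; omega
      simp [*]
    | zero r => exact this
    | nop => exact this

theorem step_complete {k nQ nR : ℕ} {E : List (ℕ × Instr × ℕ)} {i fin : ℕ}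
    (hE : ∀ e ∈ E, e.2.1.reg < nR) {q q' : ℕ} {f : ℕ → Finset ℕ} {s' : ℕ → ℕ}
    (hf : ∀ r, nR ≤ r → f r = ∅)
    (h : EStep E (q, fun r => (f r).card) (q', s')) :
    ∃ x f', (mkA k nQ nR E i fin).Step (q, f) x (q', f') ∧ s' = fun r => (f' r).card := by
  obtain ⟨a, he, ha⟩ := h
  have hd : ∃ d, (∀ r, a = .inc r → d ∉ f r) ∧ (∀ r, a = .dec r → d ∈ f r) := by
    cases a with
    | inc r =>
      obtain ⟨d, hd⟩ := Infinite.exists_notMem_finset (f r)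
      exact ⟨d, by simp [hd], by simp⟩
    | dec r =>
      obtain ⟨d, hd⟩ := Finset.card_pos.1 (Nat.pos_of_ne_zero ha.1)
      exact ⟨d, by simp, by simp [hd]⟩
    | zero r => exact ⟨0, by simp, by simp⟩
    | nop => exact ⟨0, by simp, by simp⟩
  obtain ⟨d, hd1, hd2⟩ := hd
  have hstep : (mkA k nQ nR E i fin).Step (q, f) (0, d)
      (q', (tr k nR (q, a, q')).apply f d) := by
    refine ⟨tr k nR (q, a, q'), List.mem_map_of_mem he, rfl, rfl, ?_, ?_, ?_, rfl⟩
    · intro r hr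
      cases a <;> simp [tr] at hr
      subst hr; exact hd2 _ rfl
    · intro r hr
      cases a <;> simp [tr] at hr
      subst hr; exact hd1 _ rfl
    · intro r hr
      cases a <;> simp [tr] at hr
      subst hr; exact Finset.card_eq_zero.1 ha.1
  refine ⟨_, _, hstep, ?_⟩
  rw [tr_apply k nR q q' a f d hf (hE _ he)]
  cases a with
  | inc r =>
    have ha : s' = _ := ha
    rw [ha]
    funext y
    by_cases hy : y = r
    · subst hy; simp [hd1 y rfl]
    · simp [hy]
  | dec r =>
    have ha2 : s' = _ := ha.2
    rw [ha2]
    funext y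
    by_cases hy : y = r
    · subst hy; simp [hd2 y rfl]
    · simp [hy]
  | zero r => exact ha.2
  | nop => exact ha

theorem lang_iff {k nQ nR : ℕ} {E : List (ℕ × Instr × ℕ)} {i fin : ℕ}
    (hE : ∀ e ∈ E, e.2.1.reg < nR) :
    (mkA k nQ nR E i fin).Lang ≠ ∅ ↔
      ∃ s', Relation.ReflTransGen (EStep E) (i, fun _ => 0) (fin, s') := by
  rw [← Set.nonempty_iff_ne_empty]
  constructor
  · rintro ⟨w, q₀, hq, c, hc, hcF⟩
    simp only [mkA, List.mem_singleton] at hq hcF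
    subst hq
    have key : ∀ c₀ w c, (mkA k nQ nR E q₀ fin).Run c₀ w c → (∀ r, nR ≤ r → c₀.2 r = ∅) →
        Relation.ReflTransGen (EStep E) (c₀.1, fun r => (c₀.2 r).card)
          (c.1, fun r => (c.2 r).card) := by
      intro c₀ w c h
      induction h with
      | nil => intro _; exact .refl
      | @cons c c' c'' x w hs _ ih =>
        intro h0
        obtain ⟨h1, h2⟩ := step_sound (q := c.1) (f := c.2) (q' := c'.1) (f' := c'.2) hE h0 hs
        exact .head h1 (ih h2)
    have := key _ _ _ hc (by simp)
    simp only [Finset.card_empty, hcF] at this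
    exact ⟨_, this⟩
  · rintro ⟨s', h⟩
    have key : ∀ c d : ℕ × (ℕ → ℕ), Relation.ReflTransGen (EStep E) c d →
        ∀ f : ℕ → Finset ℕ, (∀ r, nR ≤ r → f r = ∅) → c.2 = (fun r => (f r).card) →
        ∃ w f', (mkA k nQ nR E i fin).Run (c.1, f) w (d.1, f') := by
      intro c d hcd
      induction hcd using Relation.ReflTransGen.head_induction_on with
      | refl => intro f _ _; exact ⟨[], f, .nil _⟩
      | @head c e h1 _ ih =>
        intro f hf hc
        obtain ⟨q, s⟩ := c
        obtain ⟨q', t⟩ := e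
        simp only at hc
        subst hc
        obtain ⟨x, f', hs, ht⟩ := step_complete (k := k) (nQ := nQ) (i := i) (fin := fin) hE hf h1
        obtain ⟨w, g, hw⟩ := ih f' (step_sound hE hf hs).2 ht
        exact ⟨x :: w, g, .cons hs hw⟩
    obtain ⟨w, f', hw⟩ := key _ _ h (fun _ => ∅) (by simp) (by simp)
    exact ⟨w, i, by simp [mkA], _, hw, by simp [mkA]⟩

theorem mkA_wf {k nQ nR : ℕ} {E : List (ℕ × Instr × ℕ)} {i fin : ℕ}
    (hE : ∀ e ∈ E, e.2.1.reg < nR) (hQ : ∀ e ∈ E, e.1 < nQ ∧ e.2.2 < nQ)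
    (hi : i < nQ) (hfin : fin < nQ) : (mkA k nQ nR E i fin).WellFormed := by
  refine ⟨by simpa [mkA] using hi, by simpa [mkA] using hfin, ?_⟩
  intro t ht
  simp only [mkA, List.mem_map] at ht
  obtain ⟨⟨p, a, p'⟩, he, rfl⟩ := ht
  have hr := hE _ he
  have hq := hQ _ he
  simp only at hr hq
  refine ⟨hq.1, hq.2, ?_, ?_, ?_, ?_, ?_, by simp [tr, mkA], ?_⟩
  · cases a <;> simpa [tr, mkA, Instr.reg] using hr
  · cases a <;> simpa [tr, mkA, Instr.reg] using hr
  · cases a <;> simpa [tr, mkA, Instr.reg] using hr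
  · cases a <;> simpa [tr, mkA, Instr.reg] using hr
  · cases a <;> simp [tr]
  · intro l hl r' hr'
    simp only [tr, List.mem_map, List.mem_range] at hl
    obtain ⟨x, hx, rfl⟩ := hl
    simp only [mkA]
    split_ifs at hr' <;> simp at hr' <;> omega

theorem computable_mkA (k N nR fin : ℕ) (p : Prog) :
    Computable fun n : ℕ => mkA k (N + n + 1) nR (allE p N n) (N + n) fin := by
  have hA : Primrec fun q : ℕ × ℕ × List (CRemTrans (k+1)) × List ℕ × List ℕ =>
      (⟨q.1, q.2.1, q.2.2.1, q.2.2.2.1, q.2.2.2.2⟩ : CRsARem (k+1)) :=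
    Primrec.of_equiv_symm (e := ({ toFun := fun A => (A.nQ, A.nR, A.trans, A.I, A.F)
                                   invFun := fun p => ⟨p.1, p.2.1, p.2.2.1, p.2.2.2.1, p.2.2.2.2⟩
                                   left_inv := fun _ => rfl
                                   right_inv := fun _ => rfl } : CRsARem (k+1) ≃ _))
  have hT : Primrec fun q : ℕ × Fin (k+1) × List ℕ × List ℕ × List ℕ × List ℕ ×
      List (List (Option ℕ)) × ℕ =>
      (⟨q.1, q.2.1, q.2.2.1, q.2.2.2.1, q.2.2.2.2.1, q.2.2.2.2.2.1,
          q.2.2.2.2.2.2.1, q.2.2.2.2.2.2.2⟩ : CRemTrans (k+1)) :=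
    Primrec.of_equiv_symm (e := ({
      toFun := fun t => (t.src, t.letter, t.gIn, t.gNin, t.gEmp, t.rem, t.upd, t.tgt)
      invFun := fun p =>
        ⟨p.1, p.2.1, p.2.2.1, p.2.2.2.1, p.2.2.2.2.1, p.2.2.2.2.2.1,
          p.2.2.2.2.2.2.1, p.2.2.2.2.2.2.2⟩
      left_inv := fun _ => rfl
      right_inv := fun _ => rfl } : CRemTrans (k+1) ≃ _))
  have hNj : Primrec fun j : ℕ => N + j := Primrec.nat_add.comp (.const N) .id
  have hNj1 : Primrec fun j : ℕ => N + j + 1 := Primrec.succ.comp hNj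
  have htr : Primrec fun j : ℕ => tr k nR (N + j + 1, .inc 0, N + j) := by
    refine (hT.comp (.pair hNj1 (.pair (.const 0) (.pair (.const []) (.pair (.const [0])
      (.pair (.const []) (.pair (.const []) (.pair (.const ((List.range nR).map fun x =>
        if Instr.inc 0 = .inc x then [some x, none] else [some x])) hNj)))))))).of_eq ?_
    intro j; rfl
  have hl : Primrec fun n : ℕ => (List.range n).map fun j => tr k nR (N + j + 1, .inc 0, N + j) :=
    Primrec.list_map Primrec.list_range (htr.comp Primrec.snd).to₂
  have hall : Primrec fun n : ℕ => (allE p N n).map (tr k nR) := by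
    refine (Primrec.list_append.comp (.const (((N, .nop, Encodable.encode [p]) ::
      (edges p []).map encE).map (tr k nR))) hl).of_eq ?_
    intro n
    simp [allE, Function.comp_def]
  refine ((hA.comp (.pair hNj1 (.pair (.const nR) (.pair hall
    (.pair (Primrec.list_cons.comp hNj (.const [])) (.const [fin])))))).of_eq ?_).to_comp
  intro n; rfl

theorem exists_bound {α : Type*} (l : List α) (f : α → ℕ) : ∃ N, ∀ e ∈ l, f e < N := by
  induction l with
  | nil => exact ⟨0, by simp⟩
  | cons a l ih =>
    obtain ⟨N, hN⟩ := ih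
    refine ⟨N + f a + 1, ?_⟩
    intro e he
    rcases List.mem_cons.1 he with rfl | h
    · omega
    · have := hN e h; omega

end RsaUndec


/-- The emptiness problem for register set automata with removal
and register emptiness test is undecidable: no computable function decides, given
(an encoding of) such an automaton, whether its language is empty. -/
theorem rsarem_emptiness_undecidable (k : ℕ) :
    ¬ ∃ f : CRsARem (k + 1) → Bool, Computable f ∧
        ∀ A : CRsARem (k + 1), A.WellFormed → (f A = true ↔ CRsARem.Lang A = ∅) := by
  rintro ⟨f, hf, hfA⟩
  have hpart : Partrec fun m : ℕ => Nat.Partrec.Code.eval (Denumerable.ofNat _ m) 0 :=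
    Nat.Partrec.Code.eval_part.comp (Computable.ofNat _) (.const 0)
  obtain ⟨p, hp⟩ := RsaUndec.exists_prog hpart
  obtain ⟨N1, hN1⟩ := RsaUndec.exists_bound (RsaUndec.edges p []) fun e => Encodable.encode e.1
  obtain ⟨N2, hN2⟩ := RsaUndec.exists_bound (RsaUndec.edges p []) fun e => Encodable.encode e.2.2
  obtain ⟨R, hR⟩ := RsaUndec.exists_bound (RsaUndec.edges p []) fun e => e.2.1.reg
  set fin := Encodable.encode ([] : List RsaUndec.Prog) with hfin
  set N := N1 + N2 + fin + Encodable.encode [p] + 1 with hN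
  have hlt : ∀ e ∈ RsaUndec.edges p [], Encodable.encode e.1 < N ∧ Encodable.encode e.2.2 < N := by
    intro e he
    have h1 := hN1 e he
    have h2 := hN2 e he
    omega
  have hreg : ∀ n, ∀ e ∈ RsaUndec.allE p N n, e.2.1.reg < R + 1 := by
    intro n e he
    simp only [RsaUndec.allE, List.mem_append, List.mem_cons, List.mem_map, List.mem_range] at he
    rcases he with (rfl | ⟨e, he, rfl⟩) | ⟨j, hj, rfl⟩
    · simp [RsaUndec.Instr.reg]
    · have := hR e he
      simp only [RsaUndec.encE]
      omega
    · simp [RsaUndec.Instr.reg]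
  have hst : ∀ n, ∀ e ∈ RsaUndec.allE p N n, e.1 < N + n + 1 ∧ e.2.2 < N + n + 1 := by
    intro n e he
    simp only [RsaUndec.allE, List.mem_append, List.mem_cons, List.mem_map, List.mem_range] at he
    rcases he with (rfl | ⟨e, he, rfl⟩) | ⟨j, hj, rfl⟩
    · simp only; omega
    · have := hlt e he
      simp only [RsaUndec.encE]
      omega
    · simp only; omega
  set A : ℕ → CRsARem (k + 1) := fun n =>
    RsaUndec.mkA k (N + n + 1) (R + 1) (RsaUndec.allE p N n) (N + n) fin with hA
  have hdom : ∀ m, f (A m) = false ↔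
      (Nat.Partrec.Code.eval (Denumerable.ofNat Nat.Partrec.Code m) 0).Dom := by
    intro m
    rw [← hp m, ← Bool.not_eq_true,
      hfA (A m) (RsaUndec.mkA_wf (hreg m) (hst m) (by omega) (by omega))]
    change _ ≠ _ ↔ _
    rw [RsaUndec.lang_iff (hreg m)]
    simp only [fin, RsaUndec.allE_iff p N m hlt (by omega) (by omega)]
  apply ComputablePred.halting_problem 0
  rw [ComputablePred.computable_iff]
  refine ⟨fun c => !(f (A (Encodable.encode c))), ?_, ?_⟩
  · exact Primrec.not.to_comp.comp (hf.comp
      ((RsaUndec.computable_mkA k N (R + 1) fin p).comp Computable.encode))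
  · funext c
    have := hdom (Encodable.encode c)
    rw [Denumerable.ofNat_encode] at this
    simp [← this]
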